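/- For every n ≥ 2, the maximum size of a subset of S_n whose distinct elements are at pairwise translocation distance at least 2 equals (n−1)!; that is, A∘(n,2) = (n−1)!. -/

import Mathlib

/-- `IsMove l l'` holds if `l'` is obtained from `l` by a single translocation:
removing the element at position `i` and reinserting it at position `j`. -/
def IsMove {α : Type*} (l l' : List α) : Prop :=
  ∃ i j : Fin l.length, l' = (l.eraseIdx i).insertIdx j (l.get i)

/-- `ReachIn step m l l'` holds if `l'` can be obtained from `l` by `m` applications
of the relation `step`. -/
def ReachIn {α : Type*} (step : List α → List α → Prop) : ℕ → List α → List α → Prop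
  | 0, l, l' => l = l'
  | m+1, l, l' => ∃ l'', step l l'' ∧ ReachIn step m l'' l'

/-- The one-line notation of a permutation of `Fin n`. -/
def oneLine {n : ℕ} (σ : Equiv.Perm (Fin n)) : List (Fin n) := List.ofFn σ

/-- The translocation distance: the minimum number of translocations transforming
the one-line notation of `σ` into that of `π`. -/
noncomputable def translocDist {n : ℕ} (σ π : Equiv.Perm (Fin n)) : ℕ :=
  sInf {m | ReachIn IsMove m (oneLine σ) (oneLine π)}

/-- `maxTranslocCode n d` is the maximum size of a subset of the symmetric group on
`n` elements whose distinct elements are at pairwise translocation distance at least `d`. -/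
noncomputable def maxTranslocCode (n d : ℕ) : ℕ :=
  sSup {M | ∃ C : Finset (Equiv.Perm (Fin n)), C.card = M ∧
    ∀ σ ∈ C, ∀ π ∈ C, σ ≠ π → d ≤ translocDist σ π}

theorem ReachIn.trans {α : Type*} {step : List α → List α → Prop} {m k : ℕ} :
    ∀ {a b c : List α}, ReachIn step m a b → ReachIn step k b c → ReachIn step (m + k) a c := by
  induction m with
  | zero =>
    intro a b c h1 h2
    have : a = b := h1
    subst this
    simpa using h2
  | succ m ih =>
    rintro a b c ⟨x, hx, hr⟩ h2
    rw [Nat.succ_add_eq_add_succ, Nat.add_succ]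
    exact ⟨x, hx, ih hr h2⟩

theorem IsMove.cons {α : Type*} {l l' : List α} (x : α) (h : IsMove l l') :
    IsMove (x :: l) (x :: l') := by
  obtain ⟨i, j, rfl⟩ := h
  refine ⟨i.succ, j.succ, ?_⟩
  simp

theorem ReachIn.cons {α : Type*} (x : α) {m : ℕ} :
    ∀ {a b : List α}, ReachIn IsMove m a b → ReachIn IsMove m (x :: a) (x :: b) := by
  induction m with
  | zero =>
    intro a b h
    have : a = b := h
    subst this
    exact rfl
  | succ m ih =>
    rintro a b ⟨y, hy, hr⟩
    exact ⟨_, hy.cons x, ih hr⟩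

theorem reach_of_perm {α : Type*} {l l' : List α} (h : l.Perm l') :
    ∃ m, ReachIn IsMove m l l' := by
  induction h with
  | nil => exact ⟨0, rfl⟩
  | cons x _ ih =>
    obtain ⟨m, hm⟩ := ih
    exact ⟨m, hm.cons x⟩
  | swap x y l =>
    refine ⟨1, _, ⟨⟨0, by simp⟩, ⟨1, by simp⟩, rfl⟩, ?_⟩
    simp [ReachIn]
  | trans _ _ ih1 ih2 =>
    obtain ⟨m, hm⟩ := ih1
    obtain ⟨k, hk⟩ := ih2
    exact ⟨_, hm.trans hk⟩

/-- Co-major index: sum over descents of the number of letters after the descent. -/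
def comaj : List ℕ → ℕ
  | [] => 0
  | [_] => 0
  | x :: y :: l => (if y < x then l.length + 1 else 0) + comaj (y :: l)

theorem comaj_insert (a : ℕ) (w : List ℕ) : ∀ p, a ≠ p → a ∉ w →
    (∀ i ≤ w.length, comaj (p :: w) + (if a < p then 1 else 0) ≤ comaj (p :: w.insertIdx i a) ∧
      comaj (p :: w.insertIdx i a) ≤ comaj (p :: w) + w.length + (if a < p then 1 else 0)) ∧
    (∀ i ≤ w.length, ∀ j ≤ w.length,
      comaj (p :: w.insertIdx i a) = comaj (p :: w.insertIdx j a) → i = j) := by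
  induction w with
  | nil =>
    intro p hp _
    constructor
    · intro i hi
      have : i = 0 := by simpa using hi
      subst this
      simp [comaj]
    · intro i hi j hj _
      simp at hi hj
      omega
  | cons q w ih =>
    intro p hp hw
    simp only [List.mem_cons, not_or] at hw
    obtain ⟨h1, h2⟩ := ih q hw.1 hw.2
    have hq := hw.1
    have key0 : comaj (p :: (q :: w).insertIdx 0 a) =
        (if a < p then w.length + 2 else 0) + ((if q < a then w.length + 1 else 0)
          + comaj (q :: w)) := by
      simp [comaj]
    have keyS : ∀ i ≤ w.length, comaj (p :: (q :: w).insertIdx (i+1) a) =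
        (if q < p then w.length + 2 else 0) + comaj (q :: w.insertIdx i a) := by
      intro i hi
      simp [comaj, List.length_insertIdx, hi]
    have keyB : comaj (p :: q :: w) = (if q < p then w.length + 1 else 0) + comaj (q :: w) := by
      simp [comaj]
    constructor
    · intro i hi
      rw [keyB]
      rcases i with _ | i
      · rw [key0]
        simp only [List.length_cons]
        split_ifs <;> omega
      · have hi' : i ≤ w.length := by simpa using hi
        rw [keyS i hi']
        have := h1 i hi'
        simp only [List.length_cons]
        split_ifs at * <;> omega
    · have ne : ∀ i ≤ w.length, comaj (p :: (q :: w).insertIdx 0 a) ≠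
          comaj (p :: (q :: w).insertIdx (i+1) a) := by
        intro i hi
        rw [key0, keyS i hi]
        have := h1 i hi
        split_ifs at * <;> omega
      intro i hi j hj h
      rcases i with _ | i <;> rcases j with _ | j
      · rfl
      · exact absurd h (ne j (by simpa using hj))
      · exact absurd h.symm (ne i (by simpa using hi))
      · have hi' : i ≤ w.length := by simpa using hi
        have hj' : j ≤ w.length := by simpa using hj
        rw [keyS i hi', keyS j hj'] at h
        have := h2 i hi' j hj' (by omega)
        omega

/-- The statistic of a permutation. -/
def stat {n : ℕ} (l : List (Fin n)) : ℕ := comaj (0 :: l.map (fun x => x.val + 1))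

theorem map_insertIdx' {α β : Type*} (f : α → β) (a : α) (l : List α) :
    ∀ i, (l.insertIdx i a).map f = (l.map f).insertIdx i (f a) := by
  induction l with
  | nil => intro i; rcases i with _ | i <;> simp
  | cons x l ih => intro i; rcases i with _ | i <;> simp [ih]

theorem stat_insert {n : ℕ} (a : Fin n) (w : List (Fin n)) (ha : a ∉ w) (i j : ℕ)
    (hi : i ≤ w.length) (hj : j ≤ w.length)
    (h : stat (w.insertIdx i a) % (w.length + 1) = stat (w.insertIdx j a) % (w.length + 1)) :
    i = j := by
  unfold stat at h
  rw [map_insertIdx', map_insertIdx'] at h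
  have hl : (w.map (fun x => x.val + 1)).length = w.length := by simp
  obtain ⟨h1, h2⟩ := comaj_insert (a.val + 1) (w.map (fun x => x.val + 1)) 0 (by omega) (by
    simp only [List.mem_map, not_exists, not_and]
    intro x hx hxa
    have : x = a := by ext; omega
    exact ha (this ▸ hx))
  rw [hl] at h1 h2
  apply h2 i hi j hj
  have a1 := h1 i hi
  have a2 := h1 j hj
  simp only [Nat.not_lt_zero, if_false, Nat.add_zero] at a1 a2
  generalize comaj (0 :: (w.map (fun x => x.val + 1)).insertIdx i (a.val+1)) = x at *
  generalize comaj (0 :: (w.map (fun x => x.val + 1)).insertIdx j (a.val+1)) = y at *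
  generalize comaj (0 :: (w.map (fun x => x.val + 1))) = z at *
  rcases le_total x y with hxy | hxy
  · have := (Nat.modEq_iff_dvd' hxy).1 h
    have := Nat.eq_zero_of_dvd_of_lt this (by omega)
    omega
  · have := (Nat.modEq_iff_dvd' hxy).1 h.symm
    have := Nat.eq_zero_of_dvd_of_lt this (by omega)
    omega

theorem eq_of_move {n : ℕ} {l l' : List (Fin n)} (hl : l.Nodup) (hlen : l.length = n)
    (h : IsMove l l') (hs : stat l % n = stat l' % n) : l = l' := by
  obtain ⟨i, j, rfl⟩ := h
  have e : (l.eraseIdx i).insertIdx i (l.get i) = l := by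
    simpa using List.insertIdx_eraseIdx_getElem i.2
  have hw : (l.eraseIdx i).length + 1 = n := by
    rw [List.length_eraseIdx_of_lt i.2]
    have := i.2
    omega
  have hij : i.val = j.val := by
    apply stat_insert (l.get i) (l.eraseIdx i)
    · have := hl
      rw [← e] at this
      have h2 := (List.perm_insertIdx (l.get i) (l.eraseIdx i) (i := i.val) (by
        have := i.2
        omega)).nodup_iff.1 this
      exact (List.nodup_cons.1 h2).1
    · have := i.2
      omega
    · have := j.2
      omega
    · rw [e, hw]
      exact hs
  rw [← hij, e]

theorem oneLine_inj {n : ℕ} {σ π : Equiv.Perm (Fin n)} (h : oneLine σ = oneLine π) : σ = π :=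
  DFunLike.coe_injective (List.ofFn_injective h)

theorem oneLine_nodup {n : ℕ} (σ : Equiv.Perm (Fin n)) : (oneLine σ).Nodup :=
  List.nodup_ofFn.2 σ.injective

theorem mem_oneLine {n : ℕ} (σ : Equiv.Perm (Fin n)) (x : Fin n) : x ∈ oneLine σ := by
  unfold oneLine
  rw [List.mem_ofFn]
  exact σ.surjective x

theorem oneLine_perm {n : ℕ} (σ : Equiv.Perm (Fin n)) : (oneLine σ).Perm (List.finRange n) :=
  (List.perm_ext_iff_of_nodup (oneLine_nodup σ) (List.nodup_finRange n)).2
    (fun x => by simp [mem_oneLine])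

theorem two_le_dist {n : ℕ} {σ π : Equiv.Perm (Fin n)} (hne : σ ≠ π)
    (h : stat (oneLine σ) % n = stat (oneLine π) % n) : 2 ≤ translocDist σ π := by
  unfold translocDist
  apply le_csInf (reach_of_perm ((oneLine_perm σ).trans (oneLine_perm π).symm))
  intro m hm
  rcases m with _ | _ | m
  · exact absurd (oneLine_inj hm) hne
  · obtain ⟨x, hx, hr⟩ := hm
    have : x = oneLine π := hr
    subst this
    exact absurd (oneLine_inj (eq_of_move (oneLine_nodup σ) (by simp [oneLine]) hx h)) hne
  · omega

theorem exists_insert {α : Type*} [DecidableEq α] {a : α} {l : List α} (h : a ∈ l) :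
    ∃ i : Fin l.length, l.get i = a ∧ l.eraseIdx i = l.erase a ∧
      l = (l.erase a).insertIdx i a := by
  have hi : l.idxOf a < l.length := List.idxOf_lt_length_iff.2 h
  have e : l.eraseIdx (l.idxOf a) = l.erase a := (List.erase_eq_eraseIdx_of_idxOf rfl).symm
  refine ⟨⟨l.idxOf a, hi⟩, by simp, e, ?_⟩
  rw [← e]
  have := List.insertIdx_eraseIdx_getElem hi
  simpa using this.symm

theorem dist_le_one {n : ℕ} {σ π : Equiv.Perm (Fin n)} (a : Fin n)
    (h : (oneLine σ).erase a = (oneLine π).erase a) : translocDist σ π ≤ 1 := by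
  apply Nat.sInf_le
  refine ⟨oneLine π, ?_, rfl⟩
  obtain ⟨i, hi, hi2, hi3⟩ := exists_insert (mem_oneLine σ a)
  obtain ⟨j, hj, hj2, hj3⟩ := exists_insert (mem_oneLine π a)
  refine ⟨i, ⟨j.val, by have := j.2; simpa [oneLine] using this⟩, ?_⟩
  rw [hi, hi2, h]
  exact hj3

theorem code_card_le (n : ℕ) (hn : 2 ≤ n) (C : Finset (Equiv.Perm (Fin n)))
    (hC : ∀ σ ∈ C, ∀ π ∈ C, σ ≠ π → 2 ≤ translocDist σ π) :
    C.card ≤ (n - 1).factorial := by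
  let a : Fin n := ⟨0, by omega⟩
  let T := ((List.finRange n).erase a).permutations
  have hT : T.length = (n - 1).factorial := by
    simp only [T]
    rw [List.length_permutations, List.length_erase_of_mem (List.mem_finRange a),
      List.length_finRange]
  rw [← hT]
  refine le_trans ?_ (List.toFinset_card_le T)
  refine Finset.card_le_card_of_injOn (fun σ => (oneLine σ).erase a) ?_ ?_
  · intro σ _
    simp only [T, Finset.mem_coe, List.mem_toFinset, List.mem_permutations]
    exact (oneLine_perm σ).erase a
  · intro σ hσ π hπ h
    by_contra hne
    have h1 := hC σ hσ π hπ hne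
    have h2 := dist_le_one a h
    omega

/-- For every `n ≥ 2`, `A∘(n,2) = (n−1)!`. -/
theorem maxTranslocCode_two_eq (n : ℕ) (hn : 2 ≤ n) :
    maxTranslocCode n 2 = (n - 1).factorial := by
  unfold maxTranslocCode
  apply le_antisymm
  · apply csSup_le'
    rintro M ⟨C, rfl, hC⟩
    exact code_card_le n hn C hC
  · obtain ⟨r, _, hr⟩ := Finset.exists_le_card_fiber_of_mul_le_card_of_maps_to
      (s := (Finset.univ : Finset (Equiv.Perm (Fin n)))) (t := Finset.range n)
      (f := fun σ => stat (oneLine σ) % n) (n := (n - 1).factorial)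
      (fun σ _ => Finset.mem_range.2 (Nat.mod_lt _ (by omega)))
      ⟨0, Finset.mem_range.2 (by omega)⟩
      (by
        rw [Finset.card_range, Finset.card_univ, Fintype.card_perm, Fintype.card_fin,
          Nat.mul_factorial_pred (by omega)])
    refine le_trans hr (le_csSup ⟨(n - 1).factorial, ?_⟩ ⟨_, rfl, ?_⟩)
    · rintro M ⟨C, rfl, hC⟩
      exact code_card_le n hn C hC
    · intro σ hσ π hπ hne
      simp only [Finset.mem_filter] at hσ hπ
      exact two_le_dist hne (hσ.2.trans hπ.2.symm)
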